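/- Let Y be a real Banach space, let ε > 0 and M > 0, and let F : Y → Y satisfy F(0) = 0 and ‖F(u) − F(v)‖ ≤ M‖u − v‖(‖u‖^ε + ‖v‖^ε) for all u, v ∈ Y. Then for every δ with 0 < δ < 1/(2·(2M)^(1/ε)) and every a ∈ Y with ‖a‖ ≤ δ, the map Φ : u ↦ a + F(u) admits a fixed point in the closed ball of center 0 and radius 2δ, and this fixed point is the unique fixed point of Φ in that closed ball. -/

import Mathlib

/-!
On the ball of radius `R = 2δ` the growth bound makes `F` Lipschitz with constant `2 M R ^ ε`, and
the restriction on `δ` says exactly that this constant is less than `1`. Comparing with `F 0 = 0`,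
where one of the two powers vanishes, gains a factor `2`: `‖F u‖ ≤ M R ^ ε ‖u‖ ≤ R / 2 = δ`, so
`u ↦ a + F u` maps the ball to itself and the Banach fixed point theorem applies.
-/

open Function Metric Set
open scoped NNReal

theorem existsUnique_isFixedPt_of_lipschitzOnWith {α : Type*} [MetricSpace α] {K : ℝ≥0}
    {f : α → α} {s : Set α} (hs : IsComplete s) (hne : s.Nonempty) (hmaps : MapsTo f s s)
    (hK : K < 1) (hf : LipschitzOnWith K f s) : ∃! x, x ∈ s ∧ IsFixedPt f x := by
  have hcontr : ContractingWith K (hmaps.restrict f s s) := ⟨hK, hf.mapsToRestrict hmaps⟩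
  obtain ⟨x₀, hx₀⟩ := hne
  obtain ⟨x, hx, hfix, -⟩ := hcontr.exists_fixedPoint' hs hmaps hx₀ (edist_ne_top _ _)
  refine ⟨x, ⟨hx, hfix⟩, fun y ⟨hy, hyfix⟩ ↦ ?_⟩
  exact congrArg Subtype.val <| hcontr.fixedPoint_unique'
    (x := ⟨y, hy⟩) (y := ⟨x, hx⟩) (Subtype.ext hyfix) (Subtype.ext hfix)

theorem lt_one_div_rpow_one_div_iff {x c p : ℝ} (hx : 0 ≤ x) (hc : 0 < c) (hp : 0 < p) :
    x < 1 / c ^ (1 / p) ↔ c * x ^ p < 1 := by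
  rw [one_div, one_div, ← Real.inv_rpow hc.le, Real.lt_rpow_inv_iff_of_pos hx (by positivity) hp,
    ← one_div, lt_div_iff₀' hc]

/-- The growth condition `‖F u - F v‖ ≤ M ‖u - v‖ (‖u‖ ^ ε + ‖v‖ ^ ε)` for `u` and `v` in `s`: a
Lipschitz estimate whose constant degenerates at the origin. It is imposed only on `s`, which will
be the ball containing the fixed point. -/
def RpowLipschitzOn {E G : Type*} [SeminormedAddCommGroup E] [SeminormedAddCommGroup G]
    (M ε : ℝ) (F : E → G) (s : Set E) : Prop :=
  ∀ u ∈ s, ∀ v ∈ s, ‖F u - F v‖ ≤ M * ‖u - v‖ * (‖u‖ ^ ε + ‖v‖ ^ ε)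

namespace RpowLipschitzOn

variable {E G : Type*} [SeminormedAddCommGroup E] [SeminormedAddCommGroup G]
  {F : E → G} {ε M R : ℝ} {s : Set E}

theorem const_add (hF : RpowLipschitzOn M ε F s) (a : G) :
    RpowLipschitzOn M ε (fun u ↦ a + F u) s := by
  intro u hu v hv
  rw [add_sub_add_left_eq_sub]
  exact hF u hu v hv

theorem lipschitzOnWith (hF : RpowLipschitzOn M ε F s) (hε : 0 ≤ ε) (hM : 0 ≤ M)
    (hs : s ⊆ closedBall 0 R) : LipschitzOnWith (2 * M * R ^ ε).toNNReal F s := by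
  refine LipschitzOnWith.of_dist_le' fun u hu v hv ↦ ?_
  have huR : ‖u‖ ≤ R := mem_closedBall_zero_iff.1 (hs hu)
  have hvR : ‖v‖ ≤ R := mem_closedBall_zero_iff.1 (hs hv)
  rw [dist_eq_norm, dist_eq_norm]
  calc
    ‖F u - F v‖ ≤ M * ‖u - v‖ * (‖u‖ ^ ε + ‖v‖ ^ ε) := hF u hu v hv
    _ ≤ M * ‖u - v‖ * (R ^ ε + R ^ ε) := by gcongr
    _ = 2 * M * R ^ ε * ‖u - v‖ := by ring

theorem norm_le (hF : RpowLipschitzOn M ε F s) (hε : ε ≠ 0) (hF0 : F 0 = 0) (h0 : 0 ∈ s)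
    {u : E} (hu : u ∈ s) : ‖F u‖ ≤ M * ‖u‖ * ‖u‖ ^ ε := by
  simpa only [hF0, sub_zero, norm_zero, Real.zero_rpow hε, add_zero] using hF u hu 0 h0

theorem mapsTo_const_add {F : E → E} (hF : RpowLipschitzOn M ε F (closedBall 0 R)) (hε : 0 < ε)
    (hM : 0 ≤ M) (hF0 : F 0 = 0) {a : E} (ha : ‖a‖ + M * R * R ^ ε ≤ R) :
    MapsTo (fun u ↦ a + F u) (closedBall 0 R) (closedBall 0 R) := by
  intro u hu
  have huR : ‖u‖ ≤ R := mem_closedBall_zero_iff.1 hu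
  have hR : 0 ≤ R := (norm_nonneg u).trans huR
  rw [mem_closedBall_zero_iff]
  calc
    ‖a + F u‖ ≤ ‖a‖ + ‖F u‖ := norm_add_le a (F u)
    _ ≤ ‖a‖ + M * ‖u‖ * ‖u‖ ^ ε := by
      gcongr
      exact hF.norm_le hε.ne' hF0 (mem_closedBall_self hR) hu
    _ ≤ ‖a‖ + M * R * R ^ ε := by gcongr
    _ ≤ R := ha

theorem existsUnique_isFixedPt_const_add {Y : Type*} [NormedAddCommGroup Y] [CompleteSpace Y]
    {F : Y → Y} (hF : RpowLipschitzOn M ε F (closedBall 0 R)) (hε : 0 < ε) (hM : 0 ≤ M)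
    (hF0 : F 0 = 0) (hMR : 2 * M * R ^ ε < 1) {a : Y} (ha : ‖a‖ ≤ R / 2) :
    ∃! u, u ∈ closedBall 0 R ∧ IsFixedPt (fun u ↦ a + F u) u := by
  have hR : 0 ≤ R := by linarith [norm_nonneg a]
  have hhalf : M * R * R ^ ε ≤ R / 2 := by
    calc
      M * R * R ^ ε = 2 * M * R ^ ε * (R / 2) := by ring
      _ ≤ R / 2 := mul_le_of_le_one_left (by positivity) hMR.le
  have hmaps : MapsTo (fun u ↦ a + F u) (closedBall 0 R) (closedBall 0 R) :=
    hF.mapsTo_const_add hε hM hF0 (by linarith)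
  exact existsUnique_isFixedPt_of_lipschitzOnWith isClosed_closedBall.isComplete
    ⟨0, mem_closedBall_self hR⟩ hmaps (Real.toNNReal_lt_one.2 hMR)
    ((hF.const_add a).lipschitzOnWith hε.le hM Subset.rfl)

end RpowLipschitzOn

theorem fixed_point_in_ball_general {Y : Type*} [NormedAddCommGroup Y] [CompleteSpace Y]
    (ε M : ℝ) (hε : 0 < ε) (hM : 0 < M) (F : Y → Y) (hF0 : F 0 = 0)
    (δ : ℝ) (hF : RpowLipschitzOn M ε F (closedBall 0 (2 * δ)))
    (hδ : δ < 1 / (2 * (2 * M) ^ (1 / ε))) (a : Y) (ha : ‖a‖ ≤ δ) :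
    ∃ u : Y, ‖u‖ ≤ 2 * δ ∧ a + F u = u ∧
      ∀ v : Y, ‖v‖ ≤ 2 * δ → a + F v = v → v = u := by
  have hδ0 : 0 ≤ δ := (norm_nonneg a).trans ha
  have hradius : 2 * δ < 1 / (2 * M) ^ (1 / ε) := by
    rwa [div_mul_eq_div_div_swap, lt_div_iff₀' two_pos] at hδ
  have hcontr : 2 * M * (2 * δ) ^ ε < 1 :=
    (lt_one_div_rpow_one_div_iff (by positivity) (by positivity) hε).1 hradius
  obtain ⟨u, ⟨hu, hfix⟩, huniq⟩ :=
    hF.existsUnique_isFixedPt_const_add hε hM.le hF0 hcontr (a := a) (by linarith)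
  exact ⟨u, mem_closedBall_zero_iff.1 hu, hfix, fun v hv hvfix ↦
    huniq v ⟨mem_closedBall_zero_iff.2 hv, hvfix⟩⟩

/-- **Fixed point theorem.** Let `Y` be a real Banach space, `ε > 0`, `M > 0`, and
`F : Y → Y` with `F 0 = 0` and `‖F u - F v‖ ≤ M ‖u - v‖ (‖u‖^ε + ‖v‖^ε)`.
Then for every `0 < δ < 1/(2 (2M)^(1/ε))` and every `a` with `‖a‖ ≤ δ`, the map
`u ↦ a + F u` has a fixed point in the closed ball of radius `2δ` centered at `0`,
unique among fixed points in that ball. -/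
theorem fixed_point_in_ball
    {Y : Type*} [NormedAddCommGroup Y] [NormedSpace ℝ Y] [CompleteSpace Y]
    (ε M : ℝ) (hε : 0 < ε) (hM : 0 < M)
    (F : Y → Y) (hF0 : F 0 = 0)
    (hF : ∀ u v : Y, ‖F u - F v‖ ≤ M * ‖u - v‖ * (‖u‖ ^ ε + ‖v‖ ^ ε))
    (δ : ℝ) (hδ0 : 0 < δ) (hδ : δ < 1 / (2 * (2 * M) ^ (1 / ε)))
    (a : Y) (ha : ‖a‖ ≤ δ) :
    ∃ u : Y, ‖u‖ ≤ 2 * δ ∧ a + F u = u ∧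
      ∀ v : Y, ‖v‖ ≤ 2 * δ → a + F v = v → v = u :=
  fixed_point_in_ball_general ε M hε hM F hF0 δ (fun u _ v _ ↦ hF u v) hδ a ha
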